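/- arXiv:cond-mat/0112045 — 3 statements merged into one kernel-verified Lean document; each statement's English description precedes it below -/
import Mathlib

section
/- In the CreditRisk⁺ model, for every real z with 0 < z < ρ_g the expectation E_α[L z^L] is finite, and for every i = 1,…,n one has E_α[N_i z^L] ≤ ν_i^{−1} E_α[L z^L]; in particular E_α[N_i z^L] is finite for all z ∈ (0, ρ_g). -/
open MeasureTheory ProbabilityTheory Real

noncomputable section

/-- The gamma measure is sigma-finite (needed to form product measures). -/
instance gammaMeasure.instSigmaFinite (a r : ℝ) :
    SigmaFinite (gammaMeasure a r) := by
  unfold ProbabilityTheory.gammaMeasure ProbabilityTheory.gammaPDF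
  infer_instance

/-- Conditional Poisson intensity `R_i(s) = r_{0,i} S_0 + sum_j r_{j,i} s_j`. -/
def crpR {n k : ℕ} (S0 : ℝ) (r0 : Fin n → ℝ) (r : Fin k → Fin n → ℝ)
    (s : Fin k → ℝ) (i : Fin n) : ℝ :=
  r0 i * S0 + ∑ j, r j i * s j

/-- The CreditRisk⁺ measure `P_α` on `(Fin k → ℝ) × (Fin n → ℕ)`: the product of the
Gamma factor measures (shape `α j`, scale `β j`, i.e. rate `(β j)⁻¹`), composed with the
kernel sending the factor vector `s` to the product of Poisson measures with means `R_i(s)`,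
recorded jointly with `s`. -/
def crpMeasure {n k : ℕ} (S0 : ℝ) (r0 : Fin n → ℝ) (r : Fin k → Fin n → ℝ)
    (α β : Fin k → ℝ) : Measure ((Fin k → ℝ) × (Fin n → ℕ)) :=
  (Measure.pi fun j => gammaMeasure (α j) (β j)⁻¹).bind fun s =>
    (Measure.pi fun i => poissonMeasure (crpR S0 r0 r s i).toNNReal).map fun x => (s, x)

/-- Portfolio loss `L = ∑ ν_i N_i`. -/
def crpLoss {n k : ℕ} (ν : Fin n → ℕ) (x : (Fin k → ℝ) × (Fin n → ℕ)) : ℕ :=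
  ∑ i, ν i * x.2 i

/-- Value-at-risk of the ℕ-valued loss `L` at level `δ`: the smallest `l` with
`P[L ≤ l] ≥ δ` (a natural number since `L` is ℕ-valued). -/
def crpVaR {n k : ℕ} (P : Measure ((Fin k → ℝ) × (Fin n → ℕ)))
    (ν : Fin n → ℕ) (δ : ℝ) : ℕ :=
  sInf {l : ℕ | ENNReal.ofReal δ ≤ P {x | crpLoss ν x ≤ l}}

/-- `ρ_g`, the radius of convergence of the probability generating function. -/
def crpRadius {n k : ℕ} (ν : Fin n → ℕ) (r : Fin k → Fin n → ℝ) (β : Fin k → ℝ) : ℝ :=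
  sSup {z : ℝ | 0 < z ∧ ∀ j, ∑ i, r j i * z ^ ν i < 1 + (β j)⁻¹}

lemma exists_natCast_mul_pow_le {z w : ℝ} (hz : 0 < z) (hzw : z < w) :
    ∃ C : ℝ, ∀ m : ℕ, (m : ℝ) * z ^ m ≤ C * w ^ m := by
  have hw : 0 < w := hz.trans hzw
  obtain ⟨C, hC⟩ := (tendsto_self_mul_const_pow_of_lt_one (div_nonneg hz.le hw.le)
    ((div_lt_one hw).2 hzw)).bddAbove_range
  refine ⟨C, fun m => ?_⟩
  have h : (m : ℝ) * (z / w) ^ m ≤ C := hC ⟨m, rfl⟩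
  rwa [div_pow, ← mul_div_assoc, div_le_iff₀ (pow_pos hw m)] at h

lemma lintegral_pi_prod_eval {ι : Type*} [Fintype ι] {Ω : ι → Type*}
    [∀ i, MeasurableSpace (Ω i)] (μ : ∀ i, Measure (Ω i)) [∀ i, IsProbabilityMeasure (μ i)]
    {f : ∀ i, Ω i → ENNReal} (hf : ∀ i, Measurable (f i)) :
    ∫⁻ x, ∏ i, f i (x i) ∂Measure.pi μ = ∏ i, ∫⁻ y, f i y ∂μ i := by
  rw [lintegral_prod_eq_prod_lintegral_of_indepFun Finset.univ
    (fun i (x : ∀ i, Ω i) => f i (x i))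
    (iIndepFun_pi fun i => (hf i).aemeasurable)
    (fun i => (hf i).comp (measurable_pi_apply i))]
  refine Finset.prod_congr rfl fun i _ => ?_
  exact (measurePreserving_eval μ i).lintegral_comp (hf i)

lemma lintegral_pow_poissonMeasure (lam : NNReal) {t : ℝ} (ht : 0 ≤ t) :
    ∫⁻ m, ENNReal.ofReal (t ^ m) ∂poissonMeasure lam
      = ENNReal.ofReal (exp (lam * (t - 1))) := by
  have hsum : HasSum (fun m : ℕ => t ^ m * (exp (-lam) * lam ^ m / m.factorial))
      (exp (lam * (t - 1))) := by
    have h := (NormedSpace.expSeries_div_hasSum_exp ((lam : ℝ) * t)).mul_left (exp (-lam))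
    rw [← exp_eq_exp_ℝ, ← exp_add] at h
    have hexp : (lam : ℝ) * (t - 1) = -lam + lam * t := by ring
    rw [hexp]
    refine h.congr_fun fun m => ?_
    rw [mul_pow]
    ring
  rw [lintegral_countable']
  simp_rw [poissonMeasure_singleton, ← ENNReal.ofReal_mul (pow_nonneg ht _)]
  rw [← ENNReal.ofReal_tsum_of_nonneg (fun m => by positivity) hsum.summable, hsum.tsum_eq]

lemma ae_nonneg_gammaMeasure (a r : ℝ) : ∀ᵐ x ∂gammaMeasure a r, 0 ≤ x := by
  have h : gammaMeasure a r (Set.Iio 0) = 0 := by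
    rw [gammaMeasure, withDensity_apply _ measurableSet_Iio,
      lintegral_gammaPDF_of_nonpos le_rfl]
  simpa [ae_iff, Set.Iio] using h

lemma lintegral_exp_mul_gammaMeasure_lt_top {a r t : ℝ} (ha : 0 < a) (hr : 0 < r)
    (ht : t < r) : ∫⁻ x, ENNReal.ofReal (exp (t * x)) ∂gammaMeasure a r < ⊤ := by
  have hm : Measurable (gammaPDF a r) := (measurable_gammaPDFReal a r).ennreal_ofReal
  have hrt : 0 < r - t := sub_pos.2 ht
  set K : ℝ := (r ^ a / Gamma a) / ((r - t) ^ a / Gamma a) with hK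
  have hne : (r - t) ^ a / Gamma a ≠ 0 :=
    (div_pos (rpow_pos_of_pos hrt a) (Gamma_pos_of_pos ha)).ne'
  have hKpos : 0 ≤ K := by
    have := Gamma_pos_of_pos ha
    positivity
  have hpdf : ∀ x, gammaPDF a r x * ENNReal.ofReal (exp (t * x))
      = ENNReal.ofReal K * gammaPDF a (r - t) x := by
    intro x
    rcases lt_or_ge x 0 with hx | hx
    · simp [gammaPDF_of_neg hx]
    · rw [gammaPDF_of_nonneg hx, gammaPDF_of_nonneg hx, ← ENNReal.ofReal_mul' (exp_pos _).le,
        ← ENNReal.ofReal_mul hKpos, mul_assoc _ (exp _) (exp _), ← exp_add, ← mul_assoc,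
        ← mul_assoc, hK, div_mul_cancel₀ _ hne]
      ring_nf
  rw [gammaMeasure, lintegral_withDensity_eq_lintegral_mul _ hm (by fun_prop)]
  simp_rw [Pi.mul_apply, hpdf]
  rw [lintegral_const_mul' _ _ ENNReal.ofReal_ne_top, lintegral_gammaPDF_eq_one ha hrt, mul_one]
  exact ENNReal.ofReal_lt_top

lemma measurable_crpLoss {n k : ℕ} (ν : Fin n → ℕ) :
    Measurable (crpLoss ν : (Fin k → ℝ) × (Fin n → ℕ) → ℕ) := by
  unfold crpLoss
  fun_prop

/-- Conditional probability generating function of the loss, given the factors. -/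
lemma lintegral_pow_crpLoss_of_factors {n k : ℕ} (ν : Fin n → ℕ) (S0 : ℝ) (hS0 : 0 ≤ S0)
    (r0 : Fin n → ℝ) (r : Fin k → Fin n → ℝ) (hr0 : ∀ i, 0 ≤ r0 i) (hr : ∀ j i, 0 ≤ r j i)
    {w : ℝ} (hw : 0 ≤ w) {s : Fin k → ℝ} (hs : ∀ j, 0 ≤ s j) :
    ∫⁻ x, ENNReal.ofReal (w ^ crpLoss ν x)
        ∂((Measure.pi fun i => poissonMeasure (crpR S0 r0 r s i).toNNReal).map fun x => (s, x))
      = ENNReal.ofReal (exp (∑ i, r0 i * S0 * (w ^ ν i - 1))) *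
        ∏ j, ENNReal.ofReal (exp ((∑ i, r j i * (w ^ ν i - 1)) * s j)) := by
  have hR : ∀ i, 0 ≤ crpR S0 r0 r s i := fun i =>
    add_nonneg (mul_nonneg (hr0 i) hS0)
      (Finset.sum_nonneg fun j _ => mul_nonneg (hr j i) (hs j))
  rw [lintegral_map (((measurable_crpLoss ν).const_pow w).ennreal_ofReal) (by fun_prop)]
  have hprod : ∀ x : Fin n → ℕ, ENNReal.ofReal (w ^ crpLoss ν (s, x))
      = ∏ i, ENNReal.ofReal ((w ^ ν i) ^ x i) := by
    intro x
    rw [← ENNReal.ofReal_prod_of_nonneg fun i _ => by positivity]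
    simp only [crpLoss, ← Finset.prod_pow_eq_pow_sum, pow_mul]
  simp_rw [hprod]
  rw [lintegral_pi_prod_eval (fun i => poissonMeasure (crpR S0 r0 r s i).toNNReal)
    (f := fun i m => ENNReal.ofReal ((w ^ ν i) ^ m)) fun i => .of_discrete]
  simp_rw [lintegral_pow_poissonMeasure _ (pow_nonneg hw _), Real.coe_toNNReal _ (hR _)]
  rw [← ENNReal.ofReal_prod_of_nonneg fun i _ => (exp_pos _).le,
    ← ENNReal.ofReal_prod_of_nonneg fun i _ => (exp_pos _).le,
    ← ENNReal.ofReal_mul (exp_pos _).le, ← exp_sum, ← exp_sum, ← exp_add]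
  congr 2
  simp_rw [crpR, add_mul, Finset.sum_add_distrib, Finset.sum_mul]
  rw [Finset.sum_comm]
  congr 1
  exact Finset.sum_congr rfl fun j _ => Finset.sum_congr rfl fun i _ => by ring

/-- The probability generating function of the loss is finite at every point at which all
the gamma moment generating functions involved are finite. -/
lemma integrable_pow_crpLoss {n k : ℕ} (ν : Fin n → ℕ) (S0 : ℝ) (hS0 : 0 ≤ S0)
    (r0 : Fin n → ℝ) (r : Fin k → Fin n → ℝ) (hr0 : ∀ i, 0 ≤ r0 i) (hr : ∀ j i, 0 ≤ r j i)
    (hrsum : ∀ j, ∑ i, r j i = 1)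
    (α β : Fin k → ℝ) (hα : ∀ j, 0 < α j) (hβ : ∀ j, 0 < β j)
    {w : ℝ} (hw : 0 ≤ w) (hwβ : ∀ j, ∑ i, r j i * w ^ ν i < 1 + (β j)⁻¹) :
    Integrable (fun x => w ^ crpLoss ν x) (crpMeasure S0 r0 r α β) := by
  refine ⟨((measurable_crpLoss ν).const_pow w).aestronglyMeasurable, ?_⟩
  rw [hasFiniteIntegral_iff_ofReal (ae_of_all _ fun x => pow_nonneg hw _)]
  refine (Measure.lintegral_bind_le _ _ _).trans_lt ?_
  have hprob : ∀ j, IsProbabilityMeasure (gammaMeasure (α j) (β j)⁻¹) := fun j =>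
    isProbabilityMeasure_gammaMeasure (hα j) (inv_pos.2 (hβ j))
  have hs : ∀ᵐ s ∂(Measure.pi fun j => gammaMeasure (α j) (β j)⁻¹), ∀ j, 0 ≤ s j :=
    ae_all_iff.2 fun j =>
      (measurePreserving_eval (fun j => gammaMeasure (α j) (β j)⁻¹) j).quasiMeasurePreserving.ae
        (ae_nonneg_gammaMeasure _ _)
  rw [lintegral_congr_ae (hs.mono fun s hs =>
      lintegral_pow_crpLoss_of_factors ν S0 hS0 r0 r hr0 hr hw hs),
    lintegral_const_mul' _ _ ENNReal.ofReal_ne_top,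
    lintegral_pi_prod_eval (fun j => gammaMeasure (α j) (β j)⁻¹)
      (f := fun j y => ENNReal.ofReal (exp ((∑ i, r j i * (w ^ ν i - 1)) * y)))
      fun j => by fun_prop]
  refine ENNReal.mul_lt_top ENNReal.ofReal_lt_top (ENNReal.prod_lt_top fun j _ => ?_)
  refine lintegral_exp_mul_gammaMeasure_lt_top (hα j) (inv_pos.2 (hβ j)) ?_
  simp_rw [mul_sub, mul_one, Finset.sum_sub_distrib, hrsum j]
  linarith [hwβ j]

/-- for `0 < z < ρ_g`, `E_α[L z^L]` is finite and for each `i`,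
`E_α[N_i z^L] ≤ ν_i⁻¹ E_α[L z^L]`; in particular `E_α[N_i z^L]` is finite. -/
theorem crp_Ni_zL_integrable {n k : ℕ} (hn : 0 < n) (hk : 0 < k)
    (ν : Fin n → ℕ) (hν : ∀ i, 0 < ν i)
    (S0 : ℝ) (hS0 : 0 ≤ S0)
    (r0 : Fin n → ℝ) (r : Fin k → Fin n → ℝ)
    (hr0 : ∀ i, 0 ≤ r0 i) (hr : ∀ j i, 0 ≤ r j i)
    (hr0sum : ∑ i, r0 i = 1) (hrsum : ∀ j, ∑ i, r j i = 1)
    (hrpos : ∀ i, 0 < ∑ j, r j i)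
    (α β : Fin k → ℝ) (hα : ∀ j, 0 < α j) (hβ : ∀ j, 0 < β j)
    (z : ℝ) (hz0 : 0 < z) (hzρ : z < crpRadius ν r β) :
    Integrable (fun x => (crpLoss ν x : ℝ) * z ^ crpLoss ν x) (crpMeasure S0 r0 r α β) ∧
    ∀ i : Fin n,
      Integrable (fun x => (x.2 i : ℝ) * z ^ crpLoss ν x) (crpMeasure S0 r0 r α β) ∧
      ∫ x, (x.2 i : ℝ) * z ^ crpLoss ν x ∂(crpMeasure S0 r0 r α β)
        ≤ (ν i : ℝ)⁻¹ *
          ∫ x, (crpLoss ν x : ℝ) * z ^ crpLoss ν x ∂(crpMeasure S0 r0 r α β) := by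
  obtain ⟨w, ⟨hw0, hwβ⟩, hzw⟩ : ∃ w ∈ {z : ℝ | 0 < z ∧ ∀ j, ∑ i, r j i * z ^ ν i < 1 + (β j)⁻¹},
      z < w := by
    refine exists_lt_of_lt_csSup (Set.nonempty_iff_ne_empty.2 fun h => ?_) hzρ
    rw [crpRadius, h, Real.sSup_empty] at hzρ
    exact hz0.not_gt hzρ
  obtain ⟨C, hC⟩ := exists_natCast_mul_pow_le hz0 hzw
  have hL := measurable_crpLoss (k := k) ν
  have hzL : Measurable fun x : (Fin k → ℝ) × (Fin n → ℕ) => z ^ crpLoss ν x := hL.const_pow z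
  have hint : Integrable (fun x => (crpLoss ν x : ℝ) * z ^ crpLoss ν x)
      (crpMeasure S0 r0 r α β) := by
    refine ((integrable_pow_crpLoss ν S0 hS0 r0 r hr0 hr hrsum α β hα hβ hw0.le hwβ).const_mul
      C).mono' (by fun_prop) (ae_of_all _ fun x => ?_)
    rw [Real.norm_of_nonneg (by positivity)]
    exact hC _
  refine ⟨hint, fun i => ?_⟩
  have hle : ∀ x : (Fin k → ℝ) × (Fin n → ℕ), (x.2 i : ℝ) * z ^ crpLoss ν x
      ≤ (ν i : ℝ)⁻¹ * ((crpLoss ν x : ℝ) * z ^ crpLoss ν x) := by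
    intro x
    have hνi : (0 : ℝ) < ν i := by exact_mod_cast hν i
    have h : ν i * x.2 i ≤ crpLoss ν x :=
      Finset.single_le_sum (f := fun i => ν i * x.2 i) (fun _ _ => Nat.zero_le _)
        (Finset.mem_univ i)
    rw [← mul_assoc]
    refine mul_le_mul_of_nonneg_right ?_ (by positivity)
    rw [← div_eq_inv_mul, le_div_iff₀' hνi]
    exact_mod_cast h
  have hinti : Integrable (fun x => (x.2 i : ℝ) * z ^ crpLoss ν x) (crpMeasure S0 r0 r α β) := by
    refine (hint.const_mul (ν i : ℝ)⁻¹).mono' (by fun_prop) (ae_of_all _ fun x => ?_)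
    rw [Real.norm_of_nonneg (by positivity)]
    exact hle x
  refine ⟨hinti, ?_⟩
  rw [← integral_const_mul]
  exact integral_mono hinti (hint.const_mul _) hle
end
end

section
/- (Remark 2 (iii).) In the CreditRisk⁺ model, fix δ ∈ (0,1) and i ∈ {1,…,n}, and let q_δ(L) be the value-at-risk of L under P_α. Then E_α[N_i | L = q_δ(L)] = 0 if and only if every n-tuple (u₁,…,u_n) of nonnegative integers with Σ_{j=1}^n ν_j u_j = q_δ(L) satisfies u_i = 0. -/
open MeasureTheory ProbabilityTheory Real

noncomputable section

/-- A product of Poisson measures gives each point the product of the Poisson weights. -/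
lemma pi_poissonMeasure_singleton {ι : Type*} [Fintype ι] (m : ι → NNReal) (u : ι → ℕ) :
    Measure.pi (fun i => poissonMeasure (m i)) {u} = ∏ i, poissonMeasure (m i) {u i} := by
  rw [← Set.univ_pi_singleton u, Measure.pi_pi]

lemma measurable_crpR {n k : ℕ} (S0 : ℝ) (r0 : Fin n → ℝ) (r : Fin k → Fin n → ℝ) (i : Fin n) :
    Measurable fun s => crpR S0 r0 r s i := by
  unfold crpR
  fun_prop

lemma measurable_pi_poissonMeasure_singleton {n k : ℕ} (S0 : ℝ) (r0 : Fin n → ℝ)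
    (r : Fin k → Fin n → ℝ) (u : Fin n → ℕ) :
    Measurable fun s =>
      Measure.pi (fun i => poissonMeasure (crpR S0 r0 r s i).toNNReal) {u} := by
  simp only [pi_poissonMeasure_singleton, poissonMeasure_singleton]
  have h := measurable_crpR S0 r0 r
  fun_prop

/-- The kernel composed with the factor distribution in `crpMeasure` is measurable. -/
lemma measurable_map_pi_poissonMeasure {n k : ℕ} (S0 : ℝ) (r0 : Fin n → ℝ)
    (r : Fin k → Fin n → ℝ) :
    Measurable fun s : Fin k → ℝ =>
      (Measure.pi fun i => poissonMeasure (crpR S0 r0 r s i).toNNReal).map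
        fun x : Fin n → ℕ => (s, x) := by
  refine Measure.measurable_of_measurable_coe _ fun A hA => ?_
  have h : ∀ s : Fin k → ℝ,
      ((Measure.pi fun i => poissonMeasure (crpR S0 r0 r s i).toNNReal).map
        fun x : Fin n → ℕ => (s, x)) A =
      ∑' u : Fin n → ℕ, ((fun s : Fin k → ℝ => (s, u)) ⁻¹' A).indicator
        (fun s => Measure.pi (fun i => poissonMeasure (crpR S0 r0 r s i).toNNReal) {u}) s := by
    intro s
    rw [Measure.map_apply measurable_prodMk_left hA,
      ← Measure.tsum_indicator_apply_singleton _ _ (measurable_prodMk_left hA)]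
    rfl
  simp only [h]
  exact Measurable.tsum fun u =>
    (measurable_pi_poissonMeasure_singleton S0 r0 r u).indicator (measurable_prodMk_right hA)

lemma gammaMeasure_ae_pos (a r : ℝ) : ∀ᵐ x ∂gammaMeasure a r, 0 < x := by
  rw [ae_iff, gammaMeasure]
  simp only [not_lt]
  change (volume.withDensity (gammaPDF a r)) (Set.Iic 0) = 0
  rw [withDensity_apply _ measurableSet_Iic, ← setLIntegral_congr Iio_ae_eq_Iic]
  exact lintegral_gammaPDF_of_nonpos le_rfl

lemma crpR_pos {n k : ℕ} {S0 : ℝ} (hS0 : 0 ≤ S0) {r0 : Fin n → ℝ} {r : Fin k → Fin n → ℝ}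
    {i : Fin n} (hr0 : 0 ≤ r0 i) (hr : ∀ j, 0 ≤ r j i) (hrpos : 0 < ∑ j, r j i)
    {s : Fin k → ℝ} (hs : ∀ j, 0 < s j) : 0 < crpR S0 r0 r s i := by
  obtain ⟨j, -, hj⟩ := Finset.exists_lt_of_sum_lt (s := Finset.univ) (f := fun _ => (0 : ℝ))
    (g := fun j => r j i) (by simpa using hrpos)
  exact add_pos_of_nonneg_of_pos (mul_nonneg hr0 hS0)
    (Finset.sum_pos' (fun l _ => mul_nonneg (hr l) (hs l).le)
      ⟨j, Finset.mem_univ j, mul_pos hj (hs j)⟩)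

lemma isProbabilityMeasure_crpMeasure {n k : ℕ} (S0 : ℝ) (r0 : Fin n → ℝ)
    (r : Fin k → Fin n → ℝ) {α β : Fin k → ℝ} (hα : ∀ j, 0 < α j) (hβ : ∀ j, 0 < β j) :
    IsProbabilityMeasure (crpMeasure S0 r0 r α β) := by
  have := fun j => isProbabilityMeasure_gammaMeasure (hα j) (inv_pos.2 (hβ j))
  refine isProbabilityMeasure_bind (measurable_map_pi_poissonMeasure S0 r0 r).aemeasurable
    (ae_of_all _ fun s => ?_)
  exact Measure.isProbabilityMeasure_map measurable_prodMk_left.aemeasurable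

/-- Every tuple of counts has positive probability in the CreditRisk⁺ model. -/
lemma crpMeasure_counts_eq_pos {n k : ℕ} {S0 : ℝ} (hS0 : 0 ≤ S0)
    {r0 : Fin n → ℝ} {r : Fin k → Fin n → ℝ} (hr0 : ∀ i, 0 ≤ r0 i) (hr : ∀ j i, 0 ≤ r j i)
    (hrpos : ∀ i, 0 < ∑ j, r j i) {α β : Fin k → ℝ} (hα : ∀ j, 0 < α j) (hβ : ∀ j, 0 < β j)
    (u : Fin n → ℕ) : 0 < crpMeasure S0 r0 r α β {x | x.2 = u} := by
  have := fun j => isProbabilityMeasure_gammaMeasure (hα j) (inv_pos.2 (hβ j))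
  have hmeas : MeasurableSet {x : (Fin k → ℝ) × (Fin n → ℕ) | x.2 = u} :=
    measurable_snd (measurableSet_singleton u)
  rw [crpMeasure,
    Measure.bind_apply hmeas (measurable_map_pi_poissonMeasure S0 r0 r).aemeasurable]
  have hmap : ∀ s : Fin k → ℝ,
      ((Measure.pi fun i => poissonMeasure (crpR S0 r0 r s i).toNNReal).map
        fun x : Fin n → ℕ => (s, x)) {x | x.2 = u} =
      Measure.pi (fun i => poissonMeasure (crpR S0 r0 r s i).toNNReal) {u} := fun s => by
    rw [Measure.map_apply measurable_prodMk_left hmeas]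
    rfl
  simp only [hmap]
  have hpos : ∀ᵐ s ∂(Measure.pi fun j => gammaMeasure (α j) (β j)⁻¹), ∀ j, 0 < s j :=
    ae_all_iff.2 fun j => (Measure.quasiMeasurePreserving_eval _ j).ae (gammaMeasure_ae_pos _ _)
  rw [pos_iff_ne_zero, Ne, lintegral_eq_zero_iff (measurable_pi_poissonMeasure_singleton S0 r0 r u)]
  intro hzero
  obtain ⟨s, hs, hs0⟩ := (hpos.and hzero).exists
  simp only [Pi.zero_apply, pi_poissonMeasure_singleton, Finset.prod_eq_zero_iff] at hs0
  obtain ⟨l, -, hl⟩ := hs0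
  have hR := poissonMeasure_real_singleton_pos (u l)
    (Real.toNNReal_pos.2 (crpR_pos hS0 (hr0 l) (fun j => hr j l) (hrpos l) hs))
  simp [measureReal_def, hl] at hR

/-- Remark 2 (iii): `E_α[N_i | L = q_δ(L)] = 0` iff every tuple of
nonnegative integers `(u₁,…,u_n)` with `∑_j ν_j u_j = q_δ(L)` has `u_i = 0`. -/
theorem crp_zero_contribution_iff {n k : ℕ} (hn : 0 < n) (hk : 0 < k)
    (ν : Fin n → ℕ) (hν : ∀ i, 0 < ν i)
    (S0 : ℝ) (hS0 : 0 ≤ S0)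
    (r0 : Fin n → ℝ) (r : Fin k → Fin n → ℝ)
    (hr0 : ∀ i, 0 ≤ r0 i) (hr : ∀ j i, 0 ≤ r j i)
    (hr0sum : ∑ i, r0 i = 1) (hrsum : ∀ j, ∑ i, r j i = 1)
    (hrpos : ∀ i, 0 < ∑ j, r j i)
    (α β : Fin k → ℝ) (hα : ∀ j, 0 < α j) (hβ : ∀ j, 0 < β j)
    (δ : ℝ) (hδ : δ ∈ Set.Ioo (0 : ℝ) 1) (i : Fin n) :
    (∫ x in {y | crpLoss ν y = crpVaR (crpMeasure S0 r0 r α β) ν δ},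
        (x.2 i : ℝ) ∂(crpMeasure S0 r0 r α β)) /
      ((crpMeasure S0 r0 r α β)
        {x | crpLoss ν x = crpVaR (crpMeasure S0 r0 r α β) ν δ}).toReal = 0 ↔
    ∀ u : Fin n → ℕ, ∑ j, ν j * u j = crpVaR (crpMeasure S0 r0 r α β) ν δ → u i = 0 := by
  generalize crpVaR (crpMeasure S0 r0 r α β) ν δ = q
  have := isProbabilityMeasure_crpMeasure S0 r0 r hα hβ
  have hmeas : MeasurableSet {y : (Fin k → ℝ) × (Fin n → ℕ) | crpLoss ν y = q} :=
    measurable_snd (MeasurableSet.of_discrete (s := {u : Fin n → ℕ | ∑ j, ν j * u j = q}))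
  constructor
  · intro hzero u hu
    by_contra hui
    have hcounts := crpMeasure_counts_eq_pos hS0 hr0 hr hrpos hα hβ u
    have hbound : ∀ x : (Fin k → ℝ) × (Fin n → ℕ), crpLoss ν x = q → x.2 i ≤ q :=
      fun x hx => calc
        x.2 i ≤ ν i * x.2 i := Nat.le_mul_of_pos_left _ (hν i)
        _ ≤ ∑ j, ν j * x.2 j :=
          Finset.single_le_sum (f := fun j => ν j * x.2 j) (fun _ _ => Nat.zero_le _)
            (Finset.mem_univ i)
        _ = q := hx
    have hint : IntegrableOn (fun x : (Fin k → ℝ) × (Fin n → ℕ) => (x.2 i : ℝ))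
        {y | crpLoss ν y = q} (crpMeasure S0 r0 r α β) := by
      refine Measure.integrableOn_of_bounded (M := q) (measure_ne_top _ _) ?_ ?_
      · exact Measurable.aestronglyMeasurable (by fun_prop)
      · refine (ae_restrict_iff' hmeas).2 (ae_of_all _ fun x hx => ?_)
        simpa using hbound x hx
    have hnum : 0 < ∫ x in {y | crpLoss ν y = q}, (x.2 i : ℝ) ∂(crpMeasure S0 r0 r α β) := by
      rw [setIntegral_pos_iff_support_of_nonneg_ae (ae_of_all _ fun x => Nat.cast_nonneg _) hint]
      refine hcounts.trans_le (measure_mono ?_)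
      rintro x rfl
      exact ⟨by simpa using hui, hu⟩
    have hden : 0 < (crpMeasure S0 r0 r α β {x | crpLoss ν x = q}).toReal := by
      refine ENNReal.toReal_pos (hcounts.trans_le (measure_mono ?_)).ne' (measure_ne_top _ _)
      rintro x rfl
      exact hu
    exact (div_pos hnum hden).ne' hzero
  · intro h
    rw [setIntegral_eq_zero_of_forall_eq_zero fun x hx => by simpa using h x.2 hx, zero_div]
end
end

section
/- In the CreditRisk⁺ model, for every nonnegative integer t one has P_α[L = t] > 0 if and only if there exists an n-tuple (u₁,…,u_n) of nonnegative integers with Σ_{j=1}^n ν_j u_j = t. -/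
open MeasureTheory ProbabilityTheory Real

noncomputable section

/-- A gamma distributed variable is almost surely positive. -/
lemma ae_gammaMeasure_pos (a b : ℝ) : ∀ᵐ x ∂gammaMeasure a b, 0 < x := by
  have hpdf : Measurable (gammaPDF a b) := (measurable_gammaPDFReal a b).ennreal_ofReal
  rw [gammaMeasure, ae_withDensity_iff hpdf]
  filter_upwards [Measure.ae_ne volume (0 : ℝ)] with x hx hpos
  by_contra hneg
  exact hpos (gammaPDF_of_neg (lt_of_le_of_ne (not_lt.mp hneg) hx))

lemma poissonMeasure_singleton_pos {a : NNReal} (ha : 0 < a) (m : ℕ) :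
    0 < poissonMeasure a {m} := by
  have h := poissonMeasure_real_singleton_pos m ha
  rw [measureReal_def] at h
  exact (ENNReal.toReal_pos_iff.mp h).1

/-- The conditional law of factors and default counts depends measurably on the factors. -/
lemma measurable_crpKernel {n k : ℕ} (S0 : ℝ) (r0 : Fin n → ℝ) (r : Fin k → Fin n → ℝ) :
    Measurable fun s : Fin k → ℝ =>
      (Measure.pi fun i => poissonMeasure (crpR S0 r0 r s i).toNNReal).map fun x => (s, x) := by
  refine Measure.measurable_of_measurable_coe _ fun A hA => ?_
  have heq : ∀ s : Fin k → ℝ,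
      ((Measure.pi fun i => poissonMeasure (crpR S0 r0 r s i).toNNReal).map fun x => (s, x)) A
        = ∑' x : Fin n → ℕ, ((fun s => (s, x)) ⁻¹' A).indicator
            (fun s => ∏ i, poissonMeasure (crpR S0 r0 r s i).toNNReal {x i}) s := by
    intro s
    rw [Measure.map_apply measurable_prodMk_left hA, ← Measure.tsum_indicator_apply_singleton _ _
      (measurable_prodMk_left hA)]
    refine tsum_congr fun x => ?_
    simp only [Set.indicator, Measure.pi_singleton]
    rfl
  simp_rw [heq]
  refine Measurable.tsum fun x => Measurable.indicator ?_ (measurable_prodMk_right hA)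
  refine Finset.measurable_prod _ fun i _ => ?_
  simp only [poissonMeasure_singleton, crpR]
  fun_prop

/-- `P_α[L = t] > 0` iff `t` is representable as `∑_j ν_j u_j` with
nonnegative integers `u_j`. -/
theorem crp_loss_pos_iff {n k : ℕ} (hn : 0 < n) (hk : 0 < k)
    (ν : Fin n → ℕ) (hν : ∀ i, 0 < ν i)
    (S0 : ℝ) (hS0 : 0 ≤ S0)
    (r0 : Fin n → ℝ) (r : Fin k → Fin n → ℝ)
    (hr0 : ∀ i, 0 ≤ r0 i) (hr : ∀ j i, 0 ≤ r j i)
    (hr0sum : ∑ i, r0 i = 1) (hrsum : ∀ j, ∑ i, r j i = 1)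
    (hrpos : ∀ i, 0 < ∑ j, r j i)
    (α β : Fin k → ℝ) (hα : ∀ j, 0 < α j) (hβ : ∀ j, 0 < β j)
    (t : ℕ) :
    0 < (crpMeasure S0 r0 r α β) {x | crpLoss ν x = t} ↔
      ∃ u : Fin n → ℕ, ∑ j, ν j * u j = t := by
  constructor
  · intro h
    obtain ⟨x, hx⟩ := nonempty_of_measure_ne_zero h.ne'
    exact ⟨x.2, hx⟩
  · rintro ⟨u, hu⟩
    have hβ' : ∀ j, 0 < (β j)⁻¹ := fun j => inv_pos.mpr (hβ j)
    have hprob : ∀ j, IsProbabilityMeasure (gammaMeasure (α j) (β j)⁻¹) :=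
      fun j => isProbabilityMeasure_gammaMeasure (hα j) (hβ' j)
    have hmeas : MeasurableSet {x : (Fin k → ℝ) × (Fin n → ℕ) | crpLoss ν x = t} := by
      have : Measurable (crpLoss (k := k) ν) :=
        (measurable_of_countable fun y : Fin n → ℕ => ∑ i, ν i * y i).comp measurable_snd
      exact this (measurableSet_singleton t)
    have hker := measurable_crpKernel S0 r0 r
    have hfactors : ∀ᵐ s ∂Measure.pi fun j => gammaMeasure (α j) (β j)⁻¹, ∀ j, 0 < s j :=
      ae_all_iff.mpr fun j =>
        (Measure.tendsto_eval_ae_ae (i := j)).eventually (ae_gammaMeasure_pos (α j) (β j)⁻¹)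
    rw [crpMeasure, Measure.bind_apply hmeas hker.aemeasurable, pos_iff_ne_zero]
    intro hlintegral
    have hzero := (lintegral_eq_zero_iff ((Measure.measurable_coe hmeas).comp hker)).mp hlintegral
    obtain ⟨s, hs0, hs⟩ := (hzero.and hfactors).exists
    have hR : ∀ i, 0 < crpR S0 r0 r s i := by
      intro i
      obtain ⟨j, -, hj⟩ := Finset.exists_lt_of_sum_lt
        (f := fun _ : Fin k => (0 : ℝ)) (g := fun j => r j i) (s := Finset.univ)
        (by simpa using hrpos i)
      exact add_pos_of_nonneg_of_pos (mul_nonneg (hr0 i) hS0)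
        (Finset.sum_pos' (fun l _ => mul_nonneg (hr l i) (hs l).le)
          ⟨j, Finset.mem_univ j, mul_pos hj (hs j)⟩)
    rw [Pi.zero_apply, Function.comp_apply, Measure.map_apply measurable_prodMk_left hmeas] at hs0
    have hmem : u ∈ Prod.mk s ⁻¹' {x | crpLoss ν x = t} := hu
    have hu0 := measure_mono_null (Set.singleton_subset_iff.mpr hmem) hs0
    rw [Measure.pi_singleton, Finset.prod_eq_zero_iff] at hu0
    obtain ⟨i, -, hi⟩ := hu0
    exact (poissonMeasure_singleton_pos (Real.toNNReal_pos.mpr (hR i)) (u i)).ne' hi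
end
end
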